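/- arXiv:1906.03743 — 2 statements merged into one kernel-verified Lean document; each statement's English description precedes it below -/
import Mathlib

section
/- Let n be a positive integer and f : {-1,1}^n → ℝ take values in the interval [-1,1]. For every nonzero ε with |ε| ≤ 1/√n, we have |(1/ε)·(E_ε[f] − E_0[f]) − ∑_{i=1}^n f̂({i})| ≤ |ε| · n. -/
open Finset

/-- The real sign `±1` associated to a Boolean, encoding `{-1,1}`. -/
noncomputable def sgn (b : Bool) : ℝ := if b then 1 else -1

/-- Fourier coefficient `f̂(S) = 2^{-n} ∑_x f(x) ∏_{i∈S} x_i` of `f : {-1,1}^n → ℝ`. -/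
noncomputable def walshCoeff {n : ℕ} (f : (Fin n → Bool) → ℝ) (S : Finset (Fin n)) : ℝ :=
  (2 ^ n : ℝ)⁻¹ * ∑ x : Fin n → Bool, f x * ∏ i ∈ S, sgn (x i)

/-- Expectation of `f` under `ε`-biased coins:
`E_ε[f] = ∑_x f(x) ∏_i (1 + ε·x_i)/2`. -/
noncomputable def biasedExp {n : ℕ} (f : (Fin n → Bool) → ℝ) (ε : ℝ) : ℝ :=
  ∑ x : Fin n → Bool, f x * ∏ i : Fin n, (1 + ε * sgn (x i)) / 2

/-!
Expanding the density `∏ i, (1 + ε xᵢ)` gives `E_ε[f] = ∑ S, ε ^ |S| f̂(S)`, so `ε` times the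
quantity to be bounded is the tail of this series over `|S| ≥ 2`. By Cauchy–Schwarz and Parseval the
square of that tail is at most `∑ |S| ≥ 2, ε ^ (2|S|) = (1 + ε²) ^ n - 1 - n ε²` times the mean
of `f²`, and `(1 + t) ^ n - 1 - n t ≤ exp (n t) - 1 - n t ≤ (n t)²` as long as `0 ≤ n t ≤ 1`.
-/

theorem sum_finset_eq_empty_add_sum_singleton_add {ι M : Type*} [Fintype ι] [AddCommMonoid M]
    (F : Finset ι → M) :
    ∑ S, F S = F ∅ + ∑ i, F {i} + ∑ S with 2 ≤ #S, F S := by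
  classical
  have card_zero : ∑ S ∈ powersetCard 0 univ, F S = F ∅ := by
    rw [powersetCard_zero, sum_singleton]
  have card_one : ∑ S ∈ powersetCard 1 univ, F S = ∑ i, F {i} := by
    rw [powersetCard_one, sum_map]
    rfl
  have card_lt_two : ({S | ¬2 ≤ #S} : Finset (Finset ι)) =
      powersetCard 0 univ ∪ powersetCard 1 univ := by
    ext S
    simp only [mem_filter_univ, mem_union, mem_powersetCard_univ]
    lia
  have disj : Disjoint (powersetCard 0 (univ : Finset ι)) (powersetCard 1 univ) :=
    pairwise_disjoint_powersetCard univ zero_ne_one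
  rw [← sum_filter_not_add_sum_filter univ (2 ≤ #·), card_lt_two, sum_union disj, card_zero,
    card_one]

theorem one_add_pow_sub_one_sub_le_sq {n : ℕ} {t : ℝ} (ht : 0 ≤ t) (hnt : n * t ≤ 1) :
    (1 + t) ^ n - 1 - n * t ≤ (n * t) ^ 2 := by
  have pow_le_exp : (1 + t) ^ n ≤ Real.exp (n * t) := by
    rw [Real.exp_nat_mul, add_comm]
    gcongr
    exact Real.add_one_le_exp t
  have abs_le_one : |n * t| ≤ 1 := by rwa [abs_of_nonneg (by positivity)]
  calc (1 + t) ^ n - 1 - n * t ≤ Real.exp (n * t) - 1 - n * t := by gcongr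
    _ ≤ (n * t) ^ 2 := (le_abs_self _).trans (Real.abs_exp_sub_one_sub_id_le abs_le_one)

theorem mul_sq_le_one_of_abs_le_one_div_sqrt {a ε : ℝ} (ha : 0 < a) (hε : |ε| ≤ 1 / √a) :
    a * ε ^ 2 ≤ 1 := by
  calc a * ε ^ 2 = a * |ε| ^ 2 := by rw [sq_abs]
    _ ≤ a * (1 / √a) ^ 2 := by gcongr
    _ = 1 := by rw [div_pow, Real.sq_sqrt ha.le, one_pow, mul_one_div_cancel ha.ne']

theorem sum_two_le_card_pow_card (ι : Type*) {R : Type*} [Fintype ι] [CommRing R] (t : R) :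
    ∑ S : Finset ι with 2 ≤ #S, t ^ #S =
      (1 + t) ^ Fintype.card ι - 1 - Fintype.card ι * t := by
  have binomial : ∑ S : Finset ι, t ^ #S = (1 + t) ^ Fintype.card ι := by
    simpa [add_comm] using Fintype.sum_pow_mul_eq_add_pow ι t 1
  have split := sum_finset_eq_empty_add_sum_singleton_add fun S : Finset ι ↦ t ^ #S
  simp only [card_empty, pow_zero, card_singleton, pow_one, sum_const, card_univ,
    nsmul_eq_mul] at split
  rw [← binomial, split]
  ring

theorem one_add_sgn_mul_sgn (a b : Bool) : 1 + sgn a * sgn b = if a = b then 2 else 0 := by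
  cases a <;> cases b <;> norm_num [sgn]

theorem sum_walsh_mul_walsh {n : ℕ} (x y : Fin n → Bool) :
    ∑ S : Finset (Fin n), (∏ i ∈ S, sgn (x i)) * ∏ i ∈ S, sgn (y i) =
      if x = y then 2 ^ n else 0 := by
  calc ∑ S : Finset (Fin n), (∏ i ∈ S, sgn (x i)) * ∏ i ∈ S, sgn (y i)
      = ∏ i, (1 + sgn (x i) * sgn (y i)) := by
        simp only [prod_one_add, powerset_univ, prod_mul_distrib]
    _ = if x = y then 2 ^ n else 0 := by
        simp only [one_add_sgn_mul_sgn, prod_ite_zero, mem_univ, forall_const, prod_const,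
          card_univ, Fintype.card_fin, funext_iff]

section

variable {n : ℕ} (f : (Fin n → Bool) → ℝ)

/-- The `L²` norm of `f` with respect to the uniform probability measure on the cube. -/
noncomputable def cubeL2Norm : ℝ :=
  √((2 ^ n : ℝ)⁻¹ * ∑ x, f x ^ 2)

theorem cubeL2Norm_nonneg : 0 ≤ cubeL2Norm f :=
  Real.sqrt_nonneg _

theorem sq_cubeL2Norm : cubeL2Norm f ^ 2 = (2 ^ n : ℝ)⁻¹ * ∑ x, f x ^ 2 :=
  Real.sq_sqrt (by positivity)

variable {f} in
theorem cubeL2Norm_le_of_abs_le {C : ℝ} (hf : ∀ x, |f x| ≤ C) : cubeL2Norm f ≤ C := by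
  have hC : 0 ≤ C := (abs_nonneg _).trans (hf fun _ ↦ true)
  refine Real.sqrt_le_iff.2 ⟨hC, ?_⟩
  calc (2 ^ n : ℝ)⁻¹ * ∑ x, f x ^ 2 ≤ (2 ^ n : ℝ)⁻¹ * ∑ _x : Fin n → Bool, C ^ 2 := by
        gcongr (2 ^ n : ℝ)⁻¹ * ∑ x, ?_ with x
        exact sq_le_sq' (abs_le.1 (hf x)).1 (abs_le.1 (hf x)).2
    _ = C ^ 2 := by simp

theorem sum_sq_walshCoeff : ∑ S, walshCoeff f S ^ 2 = cubeL2Norm f ^ 2 := by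
  calc ∑ S, walshCoeff f S ^ 2
      = (2 ^ n : ℝ)⁻¹ ^ 2 * ∑ S : Finset (Fin n), ∑ x, ∑ y,
          f x * f y * ((∏ i ∈ S, sgn (x i)) * ∏ i ∈ S, sgn (y i)) := by
        simp only [walshCoeff, mul_pow, ← mul_sum, sq (∑ _, _), sum_mul_sum, mul_mul_mul_comm]
    _ = (2 ^ n : ℝ)⁻¹ ^ 2 * ∑ x, ∑ y, f x * f y *
          ∑ S : Finset (Fin n), (∏ i ∈ S, sgn (x i)) * ∏ i ∈ S, sgn (y i) := by
        simp only [mul_sum _ _ (f _ * f _)]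
        exact congrArg _ sum_comm_cycle.symm
    _ = (2 ^ n : ℝ)⁻¹ ^ 2 * (2 ^ n * ∑ x, f x ^ 2) := by
        simp only [sum_walsh_mul_walsh, mul_ite, mul_zero, sum_ite_eq, mem_univ, if_true,
          ← sum_mul, ← sq, mul_comm]
    _ = cubeL2Norm f ^ 2 := by
        rw [sq_cubeL2Norm]
        field_simp

theorem biasedExp_eq_sum_pow_mul_walshCoeff (ε : ℝ) :
    biasedExp f ε = ∑ S, ε ^ #S * walshCoeff f S := by
  have density_eq (x : Fin n → Bool) : ∏ i, (1 + ε * sgn (x i)) / 2 =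
      (2 ^ n : ℝ)⁻¹ * ∑ S : Finset (Fin n), ε ^ #S * ∏ i ∈ S, sgn (x i) := by
    simp only [div_eq_inv_mul, prod_mul_distrib, prod_one_add, powerset_univ, prod_const, card_univ,
      Fintype.card_fin, inv_pow]
  simp only [biasedExp, walshCoeff, density_eq, mul_sum]
  rw [sum_comm]
  refine sum_congr rfl fun S _ ↦ sum_congr rfl fun x _ ↦ ?_
  ring

theorem biasedExp_zero : biasedExp f 0 = walshCoeff f ∅ := by
  simp [biasedExp_eq_sum_pow_mul_walshCoeff, zero_pow_eq]

theorem biasedExp_sub_linear_eq_sum_two_le_card (ε : ℝ) :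
    biasedExp f ε - biasedExp f 0 - ε * ∑ i, walshCoeff f {i} =
      ∑ S with 2 ≤ #S, ε ^ #S * walshCoeff f S := by
  rw [biasedExp_zero, biasedExp_eq_sum_pow_mul_walshCoeff,
    sum_finset_eq_empty_add_sum_singleton_add]
  simp only [card_empty, pow_zero, one_mul, card_singleton, pow_one, ← mul_sum]
  ring

theorem abs_biasedExp_sub_linear_le {ε : ℝ} (hε : n * ε ^ 2 ≤ 1) :
    |biasedExp f ε - biasedExp f 0 - ε * ∑ i, walshCoeff f {i}| ≤
      n * ε ^ 2 * cubeL2Norm f := by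
  have weights_le : ∑ S : Finset (Fin n) with 2 ≤ #S, (ε ^ #S) ^ 2 ≤ (n * ε ^ 2) ^ 2 := by
    calc ∑ S : Finset (Fin n) with 2 ≤ #S, (ε ^ #S) ^ 2
        = ∑ S : Finset (Fin n) with 2 ≤ #S, (ε ^ 2) ^ #S := by simp only [← pow_mul, mul_comm]
      _ = (1 + ε ^ 2) ^ n - 1 - n * ε ^ 2 := by
          rw [sum_two_le_card_pow_card, Fintype.card_fin]
      _ ≤ (n * ε ^ 2) ^ 2 := one_add_pow_sub_one_sub_le_sq (sq_nonneg ε) hε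
  have coeffs_le : ∑ S with 2 ≤ #S, walshCoeff f S ^ 2 ≤ cubeL2Norm f ^ 2 := by
    rw [← sum_sq_walshCoeff]
    exact sum_le_univ_sum_of_nonneg fun S ↦ sq_nonneg _
  rw [biasedExp_sub_linear_eq_sum_two_le_card]
  refine abs_le_of_sq_le_sq ?_ (mul_nonneg (by positivity) (cubeL2Norm_nonneg f))
  calc (∑ S with 2 ≤ #S, ε ^ #S * walshCoeff f S) ^ 2
      ≤ (∑ S : Finset (Fin n) with 2 ≤ #S, (ε ^ #S) ^ 2) *
          ∑ S with 2 ≤ #S, walshCoeff f S ^ 2 := sum_mul_sq_le_sq_mul_sq _ _ _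
    _ ≤ (n * ε ^ 2) ^ 2 * cubeL2Norm f ^ 2 := by gcongr
    _ = (n * ε ^ 2 * cubeL2Norm f) ^ 2 := by ring

theorem coin_deriv_error_le_bounded_general {ε : ℝ} (hε0 : ε ≠ 0) (hε : n * ε ^ 2 ≤ 1) :
    |(1 / ε) * (biasedExp f ε - biasedExp f 0) - ∑ i, walshCoeff f {i}| ≤
      |ε| * n * cubeL2Norm f := by
  have eq_div : (1 / ε) * (biasedExp f ε - biasedExp f 0) - ∑ i, walshCoeff f {i} =
      (biasedExp f ε - biasedExp f 0 - ε * ∑ i, walshCoeff f {i}) / ε := by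
    field_simp
  rw [eq_div, abs_div, div_le_iff₀ (abs_pos.2 hε0)]
  calc |biasedExp f ε - biasedExp f 0 - ε * ∑ i, walshCoeff f {i}|
      ≤ n * ε ^ 2 * cubeL2Norm f := abs_biasedExp_sub_linear_le f hε
    _ = |ε| * n * cubeL2Norm f * |ε| := by
        rw [← sq_abs ε]
        ring

end

/-- if f takes values in [-1,1], then for nonzero |ε| ≤ 1/√n,
|(1/ε)(E_ε[f]−E_0[f]) − ∑_i f̂({i})| ≤ |ε|·n. -/
theorem coin_deriv_error_le_bounded (n : ℕ) (hn : 0 < n) (f : (Fin n → Bool) → ℝ)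
    (hf : ∀ x, f x ∈ Set.Icc (-1 : ℝ) 1)
    (ε : ℝ) (hε0 : ε ≠ 0) (hε : |ε| ≤ 1 / Real.sqrt n) :
    |(1 / ε) * (biasedExp f ε - biasedExp f 0) - ∑ i : Fin n, walshCoeff f {i}| ≤
      |ε| * n := by
  calc
    _ ≤ |ε| * n * cubeL2Norm f := coin_deriv_error_le_bounded_general f hε0
      (mul_sq_le_one_of_abs_le_one_div_sqrt (Nat.cast_pos.2 hn) hε)
    _ ≤ |ε| * n := mul_le_of_le_one_right (by positivity)
      (cubeL2Norm_le_of_abs_le fun x ↦ abs_le.2 (hf x))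
end

section
/- Let n be a positive integer, 0 ≤ t ≤ √n, and f : {-1,1}^n → [-1,1] with |∑_{i=1}^n f̂({i})| ≤ t. Then for every ε with |ε| ≤ t/n, we have |E_ε[f] − E_0[f]| ≤ 2t · |ε|. -/
open Finset

/-! Expanding `∏ i, (1 + ε xᵢ)` gives `E_ε[f] = ∑ S, ε ^ |S| f̂(S)`. The levels 0 and 1 contribute
`E_0[f] + ε ∑ i, f̂({i})`. By Cauchy–Schwarz and Parseval the rest is at most `‖f‖₂` times the
square root of `∑_{|S| ≥ 2} ε ^ (2|S|) = (1 + ε²)ⁿ - 1 - nε²`, which is at most `(nε²)²` when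
`nε² ≤ 1`. Together with `n|ε| ≤ t` this bounds `|E_ε[f] - E_0[f]|` by `t|ε| + nε² ≤ 2t|ε|`.
When `nε² > 1` the bound `2t|ε|` exceeds `2`, the trivial bound. -/

section SumOverSubsets

variable {ι R : Type*} [Fintype ι]

lemma sum_finset_eq_empty_add_singleton_add [AddCommMonoid R] (g : Finset ι → R) :
    ∑ S, g S = g ∅ + ∑ i, g {i} + ∑ S with 2 ≤ #S, g S := by
  classical
  have small_eq : ({S | ¬2 ≤ #S} : Finset (Finset ι)) = insert ∅ (univ.image singleton) := by
    ext S
    have : ¬2 ≤ #S ↔ #S = 0 ∨ #S = 1 := by lia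
    simp only [mem_filter_univ, this, card_eq_zero, card_eq_one, mem_insert, mem_image, mem_univ,
      true_and, eq_comm]
  rw [← sum_filter_not_add_sum_filter univ (2 ≤ #·) g, small_eq, sum_insert (by simp),
    sum_image singleton_injective.injOn]

lemma sum_pow_card_of_two_le_card [CommRing R] (a : R) :
    ∑ S : Finset ι with 2 ≤ #S, a ^ #S
      = (1 + a) ^ Fintype.card ι - 1 - Fintype.card ι * a := by
  have binomial : (1 + a) ^ Fintype.card ι = ∑ S : Finset ι, a ^ #S := by
    simpa using prod_one_add (f := fun _ : ι => a) univ
  rw [binomial, sum_finset_eq_empty_add_singleton_add]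
  simp [add_sub_right_comm]

end SumOverSubsets

lemma one_add_pow_sub_one_sub_mul_le_sq {n : ℕ} {a : ℝ} (ha : 0 ≤ a) (hna : n * a ≤ 1) :
    (1 + a) ^ n - 1 - n * a ≤ (n * a) ^ 2 := by
  have pow_le_exp : (1 + a) ^ n ≤ Real.exp (n * a) := by
    rw [Real.exp_nat_mul, add_comm]
    gcongr
    exact Real.add_one_le_exp a
  have exp_sub_le : |Real.exp (n * a) - 1 - n * a| ≤ (n * a) ^ 2 :=
    Real.abs_exp_sub_one_sub_id_le (by rwa [abs_of_nonneg (by positivity)])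
  linarith [le_of_abs_le exp_sub_le]

lemma sgn_mul_self (b : Bool) : sgn b * sgn b = 1 := by
  cases b <;> simp [sgn]

lemma sgn_mul_sgn_of_ne {b c : Bool} (h : b ≠ c) : sgn b * sgn c = -1 := by
  cases b <;> cases c <;> simp_all [sgn]

lemma abs_sgn (b : Bool) : |sgn b| = 1 := by
  cases b <;> simp [sgn]

section Fourier

variable {n : ℕ} (f : (Fin n → Bool) → ℝ) (ε : ℝ)

lemma sum_prod_sgn_mul_sgn (x y : Fin n → Bool) :
    ∑ S : Finset (Fin n), ∏ i ∈ S, sgn (x i) * sgn (y i) = if x = y then 2 ^ n else 0 := by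
  rw [← powerset_univ, ← prod_one_add]
  split_ifs with hxy
  · simp [hxy, sgn_mul_self, one_add_one_eq_two]
  · obtain ⟨i, hi⟩ := Function.ne_iff.mp hxy
    exact prod_eq_zero (mem_univ i) (by simp [sgn_mul_sgn_of_ne hi])

lemma sum_prod_one_add_mul_sgn_div_two :
    ∑ x : Fin n → Bool, ∏ i, (1 + ε * sgn (x i)) / 2 = 1 := by
  have sum_bool_eq_one : ∑ b, (1 + ε * sgn b) / 2 = 1 := by
    simp only [Fintype.sum_bool, sgn, Bool.false_eq_true, if_true, if_false]
    ring
  rw [← Fintype.piFinset_univ, ← prod_univ_sum (f := fun _ b => (1 + ε * sgn b) / 2)]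
  simp only [sum_bool_eq_one, prod_const_one]

lemma biasedExp_zero_s9 : biasedExp f 0 = (2 ^ n : ℝ)⁻¹ * ∑ x, f x := by
  simp [biasedExp, mul_sum, mul_comm]

lemma walshCoeff_empty : walshCoeff f ∅ = biasedExp f 0 := by
  simp [walshCoeff, biasedExp_zero_s9]

lemma sum_walshCoeff_sq : ∑ S, walshCoeff f S ^ 2 = biasedExp (fun x => f x ^ 2) 0 := by
  have expand (S : Finset (Fin n)) : walshCoeff f S ^ 2 =
      (2 ^ n : ℝ)⁻¹ ^ 2 * ∑ x, ∑ y, f x * f y * ∏ i ∈ S, sgn (x i) * sgn (y i) := by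
    simp only [walshCoeff, mul_pow, sq (∑ _, _), sum_mul_sum, prod_mul_distrib,
      mul_mul_mul_comm]
  calc ∑ S, walshCoeff f S ^ 2
      = (2 ^ n : ℝ)⁻¹ ^ 2 * ∑ x, ∑ y, f x * f y *
          ∑ S : Finset (Fin n), ∏ i ∈ S, sgn (x i) * sgn (y i) := by
        simp only [expand, ← mul_sum]
        rw [sum_comm]
        simp only [sum_comm (s := (univ : Finset (Finset (Fin n)))), ← mul_sum]
    _ = (2 ^ n : ℝ)⁻¹ ^ 2 * ∑ x, f x ^ 2 * 2 ^ n := by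
        simp [sum_prod_sgn_mul_sgn, sq]
    _ = biasedExp (fun x => f x ^ 2) 0 := by
        rw [biasedExp_zero_s9, ← sum_mul]
        field_simp

lemma biasedExp_eq_sum_pow_card_mul_walshCoeff :
    biasedExp f ε = ∑ S, ε ^ #S * walshCoeff f S := by
  have expand (x : Fin n → Bool) : ∏ i, (1 + ε * sgn (x i)) / 2 =
      (2 ^ n : ℝ)⁻¹ * ∑ S : Finset (Fin n), ε ^ #S * ∏ i ∈ S, sgn (x i) := by
    simp [prod_one_add, prod_mul_distrib, div_eq_inv_mul]
  simp only [biasedExp, walshCoeff, expand, mul_sum]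
  rw [sum_comm]
  exact sum_congr rfl fun S _ => sum_congr rfl fun x _ => by ring

lemma biasedExp_eq_add_sum_walshCoeff_add :
    biasedExp f ε = biasedExp f 0 + ε * ∑ i, walshCoeff f {i}
      + ∑ S with 2 ≤ #S, ε ^ #S * walshCoeff f S := by
  rw [biasedExp_eq_sum_pow_card_mul_walshCoeff, sum_finset_eq_empty_add_singleton_add]
  simp [walshCoeff_empty, mul_sum]

variable {ε}

lemma abs_biasedExp_sub_sub_le (hε : n * ε ^ 2 ≤ 1) :
    |biasedExp f ε - biasedExp f 0 - ε * ∑ i, walshCoeff f {i}|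
      ≤ n * ε ^ 2 * √(biasedExp (fun x => f x ^ 2) 0) := by
  have high_weights : ∑ S : Finset (Fin n) with 2 ≤ #S, (ε ^ #S) ^ 2 ≤ (n * ε ^ 2) ^ 2 := by
    simp only [pow_right_comm ε _ 2]
    rw [sum_pow_card_of_two_le_card, Fintype.card_fin]
    exact one_add_pow_sub_one_sub_mul_le_sq (sq_nonneg ε) hε
  have high_coeffs : ∑ S with 2 ≤ #S, walshCoeff f S ^ 2 ≤ biasedExp (fun x => f x ^ 2) 0 := by
    rw [← sum_walshCoeff_sq]
    exact sum_le_univ_sum_of_nonneg fun S => sq_nonneg _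
  calc |biasedExp f ε - biasedExp f 0 - ε * ∑ i, walshCoeff f {i}|
      = |∑ S with 2 ≤ #S, ε ^ #S * walshCoeff f S| := by
        rw [biasedExp_eq_add_sum_walshCoeff_add f ε]
        ring_nf
    _ ≤ √((∑ S : Finset (Fin n) with 2 ≤ #S, (ε ^ #S) ^ 2)
          * ∑ S with 2 ≤ #S, walshCoeff f S ^ 2) :=
        Real.abs_le_sqrt (sum_mul_sq_le_sq_mul_sq _ _ _)
    _ ≤ √((n * ε ^ 2) ^ 2 * biasedExp (fun x => f x ^ 2) 0) := by gcongr
    _ = n * ε ^ 2 * √(biasedExp (fun x => f x ^ 2) 0) := by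
        rw [Real.sqrt_mul (by positivity), Real.sqrt_sq (by positivity)]

variable {f} {C : ℝ}

lemma abs_biasedExp_le (hf : ∀ x, |f x| ≤ C) (hε : |ε| ≤ 1) : |biasedExp f ε| ≤ C := by
  have weight_nonneg (x : Fin n → Bool) : 0 ≤ ∏ i, (1 + ε * sgn (x i)) / 2 := by
    refine prod_nonneg fun i _ => ?_
    have : |ε * sgn (x i)| ≤ 1 := by rwa [abs_mul, abs_sgn, mul_one]
    linarith [neg_le_of_abs_le this]
  calc |biasedExp f ε|
      ≤ ∑ x, |f x * ∏ i, (1 + ε * sgn (x i)) / 2| := abs_sum_le_sum_abs _ _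
    _ ≤ ∑ x : Fin n → Bool, C * ∏ i, (1 + ε * sgn (x i)) / 2 := by
        gcongr with x
        rw [abs_mul, abs_of_nonneg (weight_nonneg x)]
        exact mul_le_mul_of_nonneg_right (hf x) (weight_nonneg x)
    _ = C := by rw [← mul_sum, sum_prod_one_add_mul_sgn_div_two, mul_one]

lemma abs_biasedExp_sub_le_of_mul_sq_le_one (hf : biasedExp (fun x => f x ^ 2) 0 ≤ 1)
    (hε : n * ε ^ 2 ≤ 1) :
    |biasedExp f ε - biasedExp f 0| ≤ |∑ i, walshCoeff f {i}| * |ε| + n * ε ^ 2 := by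
  have remainder_le := (abs_biasedExp_sub_sub_le f hε).trans
    (mul_le_of_le_one_right (by positivity) (Real.sqrt_le_one.mpr hf))
  have triangle := abs_add_le (biasedExp f ε - biasedExp f 0 - ε * ∑ i, walshCoeff f {i})
    (ε * ∑ i, walshCoeff f {i})
  rw [sub_add_cancel, abs_mul, mul_comm |ε|] at triangle
  linarith

end Fourier

theorem coin_theorem_of_fourier_sum_general {n : ℕ} {t ε : ℝ} {f : (Fin n → Bool) → ℝ}
    (hf : ∀ x, |f x| ≤ 1) (hsum : |∑ i, walshCoeff f {i}| ≤ t)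
    (hε : |ε| ≤ 1) (hnε : n * |ε| ≤ t) :
    |biasedExp f ε - biasedExp f 0| ≤ 2 * t * |ε| := by
  have mul_sq_le : n * ε ^ 2 ≤ t * |ε| := by
    rw [← sq_abs, sq, ← mul_assoc]
    gcongr
  rcases le_total (n * ε ^ 2) 1 with small | large
  · have sq_le_one : biasedExp (fun x => f x ^ 2) 0 ≤ 1 :=
      le_of_abs_le (abs_biasedExp_le (fun x => by simpa using hf x) (by simp))
    calc |biasedExp f ε - biasedExp f 0|
        ≤ |∑ i, walshCoeff f {i}| * |ε| + n * ε ^ 2 :=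
          abs_biasedExp_sub_le_of_mul_sq_le_one sq_le_one small
      _ ≤ t * |ε| + t * |ε| := by gcongr
      _ = 2 * t * |ε| := by ring
  · calc |biasedExp f ε - biasedExp f 0|
        ≤ |biasedExp f ε| + |biasedExp f 0| := abs_sub _ _
      _ ≤ 1 + 1 := add_le_add (abs_biasedExp_le hf hε) (abs_biasedExp_le hf (by simp))
      _ ≤ 2 * t * |ε| := by linarith

/-- if 0 ≤ t ≤ √n and f : {-1,1}^n → [-1,1] has |∑_i f̂({i})| ≤ t,
then for all |ε| ≤ t/n, |E_ε[f] − E_0[f]| ≤ 2t·|ε|. -/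
theorem coin_theorem_of_fourier_sum (n : ℕ) (hn : 0 < n) (t : ℝ) (ht0 : 0 ≤ t)
    (ht : t ≤ Real.sqrt n)
    (f : (Fin n → Bool) → ℝ) (hf : ∀ x, f x ∈ Set.Icc (-1 : ℝ) 1)
    (hsum : |∑ i : Fin n, walshCoeff f {i}| ≤ t)
    (ε : ℝ) (hε : |ε| ≤ t / n) :
    |biasedExp f ε - biasedExp f 0| ≤ 2 * t * |ε| := by
  have ht' : t / n ≤ 1 :=
    div_le_one_of_le₀ (ht.trans (Real.sqrt_le_self_iff.mpr (.inr (mod_cast hn)))) n.cast_nonneg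
  exact coin_theorem_of_fourier_sum_general (fun x => abs_le.mpr (hf x)) hsum (hε.trans ht')
    ((le_div_iff₀' (by positivity)).mp hε)
end
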